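/- arXiv:2110.09182 — 11 statements merged into one kernel-verified Lean document; each statement's English description precedes it below -/
import Mathlib

section
/- Let L be a symmetric positive semidefinite real n×n matrix such that I − L is also positive semidefinite, let P = I − L, and let E(H) = trace(Hᵀ L H). Let λ₀ be a real number with 0 < λ₀ ≤ 1 such that every nonzero eigenvalue of L is at least λ₀. Then for every real n×d matrix X and every natural number l, E(P^l X) ≤ (1 − λ₀)^{2l} · E(X). -/
open Matrix BigOperators

/-- `E(P^l X) ≤ (1 − λ₀)^{2l} E(X)` where `P = I − L`, `L` and `I − L` are PSD,
and every nonzero eigenvalue of `L` is at least `λ₀ ∈ (0,1]`. -/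
theorem energy_propagated_le (n d : ℕ) (L : Matrix (Fin n) (Fin n) ℝ)
    (hL : L.PosSemidef) (hIL : ((1 : Matrix (Fin n) (Fin n) ℝ) - L).PosSemidef)
    (P : Matrix (Fin n) (Fin n) ℝ) (hP : P = 1 - L)
    (lam0 : ℝ) (hlam0 : 0 < lam0) (hlam1 : lam0 ≤ 1)
    (hspec : ∀ μ ∈ spectrum ℝ L, μ ≠ 0 → lam0 ≤ μ)
    (X : Matrix (Fin n) (Fin d) ℝ) (l : ℕ) :
    ((P ^ l * X)ᵀ * L * (P ^ l * X)).trace ≤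
      (1 - lam0) ^ (2 * l) * (Xᵀ * L * X).trace := by
  obtain ⟨U, e, hU1, hU2, hLU, hmem⟩ : ∃ (U : Matrix (Fin n) (Fin n) ℝ) (e : Fin n → ℝ),
      U * Uᵀ = 1 ∧ Uᵀ * U = 1 ∧ L = U * diagonal e * Uᵀ ∧ ∀ i, e i ∈ spectrum ℝ L := by
    refine ⟨hL.1.eigenvectorUnitary, hL.1.eigenvalues, ?_, ?_, ?_, ?_⟩
    · exact Unitary.coe_mul_star_self hL.1.eigenvectorUnitary
    · exact Unitary.coe_star_mul_self hL.1.eigenvectorUnitary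
    · exact hL.1.spectral_theorem
    · exact fun i => hL.1.eigenvalues_mem_spectrum_real i
  have hUt : ∀ (A : Matrix (Fin n) (Fin n) ℝ), Uᵀ * (U * A) = A := fun A => by
    rw [← Matrix.mul_assoc, hU2, Matrix.one_mul]
  have hPU : P = U * diagonal (fun i => 1 - e i) * Uᵀ := by
    have : (diagonal (fun i => 1 - e i) : Matrix (Fin n) (Fin n) ℝ) = 1 - diagonal e := by
      rw [← diagonal_one, diagonal_sub]
    rw [this, Matrix.mul_sub, Matrix.sub_mul, Matrix.mul_one, hU1, ← hLU, hP]
  have hpos : ∀ i, 0 ≤ e i := by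
    have h := hL.conjTranspose_mul_mul_same U
    rw [conjTranspose_eq_transpose_of_trivial, hLU] at h
    simp only [Matrix.mul_assoc, hU2, hUt, Matrix.mul_one] at h
    exact posSemidef_diagonal_iff.1 h
  have hle : ∀ i, 0 ≤ 1 - e i := by
    have h := hIL.conjTranspose_mul_mul_same U
    rw [conjTranspose_eq_transpose_of_trivial, ← hP, hPU] at h
    simp only [Matrix.mul_assoc, hU2, hUt, Matrix.mul_one] at h
    exact posSemidef_diagonal_iff.1 h
  have hpow : P ^ l = U * diagonal (fun i => (1 - e i) ^ l) * Uᵀ := by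
    induction l with
    | zero => simp [hU1]
    | succ k ih =>
      rw [pow_succ, ih, hPU]
      simp only [Matrix.mul_assoc, hUt]
      rw [← Matrix.mul_assoc (diagonal _) (diagonal _), diagonal_mul_diagonal]
      simp only [pow_succ]
  have key : (P ^ l)ᵀ * L * P ^ l = U * diagonal (fun i => (1 - e i) ^ (2 * l) * e i) * Uᵀ := by
    rw [hpow, hLU]
    simp only [Matrix.transpose_mul, Matrix.transpose_transpose, diagonal_transpose,
      Matrix.mul_assoc, hUt]
    rw [← Matrix.mul_assoc (diagonal _) (diagonal _) (Uᵀ), diagonal_mul_diagonal,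
      ← Matrix.mul_assoc (diagonal _) (diagonal _), diagonal_mul_diagonal]
    congr 3
    ext i
    ring
  have hM : ((1 - lam0) ^ (2 * l) • L - (P ^ l)ᵀ * L * P ^ l).PosSemidef := by
    have : (1 - lam0) ^ (2 * l) • L - (P ^ l)ᵀ * L * P ^ l =
        U * diagonal (fun i => (1 - lam0) ^ (2 * l) * e i - (1 - e i) ^ (2 * l) * e i) * Uᵀ := by
      rw [key, ← diagonal_sub, Matrix.mul_sub, Matrix.sub_mul]
      congr 1
      conv_lhs => rw [hLU]
      rw [← Matrix.smul_mul, ← Matrix.mul_smul, ← diagonal_smul]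
      rfl
    rw [this, ← conjTranspose_eq_transpose_of_trivial]
    apply PosSemidef.mul_mul_conjTranspose_same
    rw [posSemidef_diagonal_iff]
    intro i
    rw [sub_nonneg]
    by_cases h0 : e i = 0
    · simp [h0]
    · have h1 := hspec _ (hmem i) h0
      exact mul_le_mul_of_nonneg_right (pow_le_pow_left₀ (hle i) (by linarith) _) (hpos i)
  have h := (hM.conjTranspose_mul_mul_same X).trace_nonneg
  rw [conjTranspose_eq_transpose_of_trivial, Matrix.mul_sub, Matrix.sub_mul, trace_sub,
    Matrix.mul_smul, Matrix.smul_mul, trace_smul, smul_eq_mul, sub_nonneg] at h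
  simpa only [Matrix.transpose_mul, Matrix.mul_assoc] using h
end

section
/- Let L be a symmetric positive semidefinite real n×n matrix such that 2I − L is also positive semidefinite (all eigenvalues of L lie in [0,2]), let P = I − L, and let E(H) = trace(Hᵀ L H). Then for every real n×d matrix X and every natural number l, the Dirichlet energy is non-increasing under propagation: E(P^l X) ≤ E(X). -/
open Matrix BigOperators

/-- The Dirichlet energy is non-increasing under propagation: `E(P^l X) ≤ E(X)`
when `L` and `2I − L` are PSD and `P = I − L`. -/
theorem energy_propagated_nonincreasing (n d : ℕ) (L : Matrix (Fin n) (Fin n) ℝ)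
    (hL : L.PosSemidef)
    (h2L : ((2 : ℝ) • (1 : Matrix (Fin n) (Fin n) ℝ) - L).PosSemidef)
    (P : Matrix (Fin n) (Fin n) ℝ) (hP : P = 1 - L)
    (X : Matrix (Fin n) (Fin d) ℝ) (l : ℕ) :
    ((P ^ l * X)ᵀ * L * (P ^ l * X)).trace ≤ (Xᵀ * L * X).trace := by
  have hLt : Lᵀ = L := by simpa using hL.isHermitian.eq
  have step : ∀ Y : Matrix (Fin n) (Fin d) ℝ,
      ((P * Y)ᵀ * L * (P * Y)).trace ≤ (Yᵀ * L * Y).trace := by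
    intro Y
    have h := (h2L.conjTranspose_mul_mul_same (L * Y)).trace_nonneg
    have e : (L * Y)ᴴ * ((2 : ℝ) • (1 : Matrix (Fin n) (Fin n) ℝ) - L) * (L * Y)
        = Yᵀ * L * Y - (P * Y)ᵀ * L * (P * Y) := by
      rw [conjTranspose_eq_transpose_of_trivial, transpose_mul, transpose_mul, hP,
        transpose_sub, transpose_one, hLt, two_smul]
      simp only [Matrix.mul_sub, Matrix.sub_mul, Matrix.mul_add, Matrix.add_mul,
        Matrix.mul_one, Matrix.one_mul, Matrix.mul_assoc]
      abel
    rw [e, trace_sub] at h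
    linarith
  induction l with
  | zero => simp
  | succ k ih =>
    rw [pow_succ', Matrix.mul_assoc P (P ^ k) X]
    exact le_trans (step (P ^ k * X)) ih
end

section
/- Let L be a symmetric positive semidefinite real n×n matrix such that I − L is also positive semidefinite, let P = I − L, and let E(H) = trace(Hᵀ L H). Then for every real n×d matrix X and every natural number l, the energy of the propagated features is dominated by the cross term: E(P^l X) ≤ trace(Xᵀ L P^l X). -/
open Matrix BigOperators

/-- `E(P^l X) ≤ trace(Xᵀ L P^l X)` when `L` and `I − L` are PSD and `P = I − L`. -/
theorem energy_le_cross_term (n d : ℕ) (L : Matrix (Fin n) (Fin n) ℝ)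
    (hL : L.PosSemidef) (hIL : ((1 : Matrix (Fin n) (Fin n) ℝ) - L).PosSemidef)
    (P : Matrix (Fin n) (Fin n) ℝ) (hP : P = 1 - L)
    (X : Matrix (Fin n) (Fin d) ℝ) (l : ℕ) :
    ((P ^ l * X)ᵀ * L * (P ^ l * X)).trace ≤ (Xᵀ * L * (P ^ l * X)).trace := by
  have hPp : P.PosSemidef := hP ▸ hIL
  have hLt : Lᵀ = L := by
    have h := hL.isHermitian.eq
    rwa [conjTranspose_eq_transpose_of_trivial] at h
  have hPt : Pᵀ = P := by
    have h := hPp.isHermitian.eq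
    rwa [conjTranspose_eq_transpose_of_trivial] at h
  have hc : Commute P L := by
    rw [hP]
    exact (Commute.one_left L).sub_left (Commute.refl L)
  have hanti : Antitone (fun k : ℕ => (Xᵀ * L * (P ^ k * X)).trace) := by
    refine antitone_nat_of_succ_le fun k => ?_
    have h := ((hPp.pow k).conjTranspose_mul_mul_same (L * X)).trace_nonneg
    have e : (L * X)ᴴ * P ^ k * (L * X)
        = Xᵀ * L * (P ^ k * X) - Xᵀ * L * (P ^ (k + 1) * X) := by
      have hLP : L = 1 - P := by rw [hP]; abel
      rw [conjTranspose_eq_transpose_of_trivial, transpose_mul, hLt, ← Matrix.mul_sub,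
        ← Matrix.sub_mul, pow_succ, Matrix.mul_assoc (Xᵀ * L), ← Matrix.mul_assoc (P ^ k)]
      congr 3
      conv_lhs => rw [hLP]
      rw [mul_sub, mul_one]
    rw [e, trace_sub] at h
    exact sub_nonneg.mp h
  have e : (P ^ l * X)ᵀ * L * (P ^ l * X) = Xᵀ * L * (P ^ (l + l) * X) := by
    rw [transpose_mul, transpose_pow, hPt, Matrix.mul_assoc Xᵀ, (hc.pow_left l).eq, pow_add]
    simp only [Matrix.mul_assoc]
  rw [e]
  exact hanti (Nat.le_add_left l l)
end

section
/- Let L be a symmetric positive semidefinite real n×n matrix such that I − L is also positive semidefinite, let P = I − L, and let E(H) = trace(Hᵀ L H). Let λ₀ be a real number with 0 < λ₀ ≤ 1 such that every nonzero eigenvalue of L is at least λ₀. Then for every real n×d matrix X and every natural number l, E(P^l X) ≤ (1 − λ₀)^l · trace(Xᵀ L P^l X). -/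
open Matrix BigOperators

/-- `E(P^l X) ≤ (1 − λ₀)^l · trace(Xᵀ L P^l X)` when `L` and `I − L` are PSD,
`P = I − L`, and every nonzero eigenvalue of `L` is at least `λ₀ ∈ (0,1]`. -/
theorem energy_le_scaled_cross_term (n d : ℕ) (L : Matrix (Fin n) (Fin n) ℝ)
    (hL : L.PosSemidef) (hIL : ((1 : Matrix (Fin n) (Fin n) ℝ) - L).PosSemidef)
    (P : Matrix (Fin n) (Fin n) ℝ) (hP : P = 1 - L)
    (lam0 : ℝ) (hlam0 : 0 < lam0) (hlam1 : lam0 ≤ 1)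
    (hspec : ∀ μ ∈ spectrum ℝ L, μ ≠ 0 → lam0 ≤ μ)
    (X : Matrix (Fin n) (Fin d) ℝ) (l : ℕ) :
    ((P ^ l * X)ᵀ * L * (P ^ l * X)).trace ≤
      (1 - lam0) ^ l * (Xᵀ * L * (P ^ l * X)).trace := by
  classical
  obtain ⟨U, v, hU, hU2, hLU, hv⟩ : ∃ (U : Matrix (Fin n) (Fin n) ℝ) (v : Fin n → ℝ),
      Uᵀ * U = 1 ∧ U * Uᵀ = 1 ∧ L = U * diagonal v * Uᵀ ∧ ∀ i, v i ∈ spectrum ℝ L := by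
    refine ⟨hL.1.eigenvectorUnitary, hL.1.eigenvalues, ?_, ?_, ?_, ?_⟩
    · have := Unitary.coe_star_mul_self hL.1.eigenvectorUnitary
      simpa [star_eq_conjTranspose, conjTranspose_eq_transpose_of_trivial] using this
    · have := Unitary.coe_mul_star_self hL.1.eigenvectorUnitary
      simpa [star_eq_conjTranspose, conjTranspose_eq_transpose_of_trivial] using this
    · have := hL.1.spectral_theorem
      rw [Unitary.conjStarAlgAut_apply] at this
      simpa [star_eq_conjTranspose, conjTranspose_eq_transpose_of_trivial,
        Function.comp_def] using this
    · intro i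
      exact hL.1.eigenvalues_mem_spectrum_real i
  have hdiagL : Uᵀ * L * U = diagonal v := by
    calc Uᵀ * L * U = (Uᵀ * U) * diagonal v * (Uᵀ * U) := by
          rw [hLU]; simp only [Matrix.mul_assoc]
      _ = _ := by rw [hU]; simp
  have h0 : ∀ i, 0 ≤ v i := by
    have h := hL.conjTranspose_mul_mul_same U
    rw [conjTranspose_eq_transpose_of_trivial, hdiagL] at h
    exact posSemidef_diagonal_iff.1 h
  have h1 : ∀ i, v i ≤ 1 := by
    have h := hIL.conjTranspose_mul_mul_same U
    rw [conjTranspose_eq_transpose_of_trivial, Matrix.mul_sub, Matrix.sub_mul, hdiagL,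
      Matrix.mul_one, hU, ← diagonal_one, diagonal_sub] at h
    intro i
    have := posSemidef_diagonal_iff.1 h i
    linarith
  have hPl : ∀ k : ℕ, P ^ k = U * diagonal (fun i => (1 - v i) ^ k) * Uᵀ := by
    intro k
    induction k with
    | zero => simp [hU2]
    | succ k ih =>
      have hP1 : P = U * diagonal (fun i => 1 - v i) * Uᵀ := by
        rw [← diagonal_sub, diagonal_one, Matrix.mul_sub, Matrix.sub_mul, Matrix.mul_one, hU2,
          ← hLU, hP]
      rw [pow_succ, ih]
      conv_lhs => rw [hP1]
      calc _ = U * diagonal (fun i => (1 - v i) ^ k) * (Uᵀ * U) * diagonal (fun i => 1 - v i) * Uᵀ := by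
            simp only [Matrix.mul_assoc]
        _ = _ := by
            rw [hU, Matrix.mul_one, Matrix.mul_assoc U, diagonal_mul_diagonal]
            simp only [pow_succ]
  have key : (1 - lam0) ^ l * (Xᵀ * L * (P ^ l * X)).trace
      - ((P ^ l * X)ᵀ * L * (P ^ l * X)).trace
      = ((Uᵀ * X)ᵀ * diagonal (fun i => (1 - lam0) ^ l * (v i * (1 - v i) ^ l)
          - (1 - v i) ^ l * v i * (1 - v i) ^ l) * (Uᵀ * X)).trace := by
    have e1 : Xᵀ * L * (P ^ l * X) = (Uᵀ * X)ᵀ * diagonal (fun i => v i * (1 - v i) ^ l) * (Uᵀ * X) := by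
      rw [hPl, hLU, ← diagonal_mul_diagonal, transpose_mul, transpose_transpose]
      calc _ = Xᵀ * U * diagonal v * (Uᵀ * U) * diagonal (fun i => (1 - v i) ^ l) * (Uᵀ * X) := by
            simp only [Matrix.mul_assoc]
        _ = _ := by rw [hU]; simp only [Matrix.mul_assoc, Matrix.one_mul]
    have e2 : (P ^ l * X)ᵀ * L * (P ^ l * X)
        = (Uᵀ * X)ᵀ * diagonal (fun i => (1 - v i) ^ l * v i * (1 - v i) ^ l) * (Uᵀ * X) := by
      rw [hPl, hLU, ← diagonal_mul_diagonal, ← diagonal_mul_diagonal]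
      simp only [transpose_mul, transpose_transpose, diagonal_transpose]
      calc _ = Xᵀ * U * diagonal (fun i => (1 - v i) ^ l) * (Uᵀ * U) * diagonal v * (Uᵀ * U)
              * diagonal (fun i => (1 - v i) ^ l) * (Uᵀ * X) := by
            simp only [Matrix.mul_assoc]
        _ = _ := by rw [hU]; simp only [Matrix.mul_assoc, Matrix.one_mul]
    have e3 : diagonal (fun i => (1 - lam0) ^ l * (v i * (1 - v i) ^ l))
        = (1 - lam0) ^ l • diagonal (fun i => v i * (1 - v i) ^ l) := by
      rw [← diagonal_smul]; rfl
    rw [e1, e2, ← diagonal_sub, e3, Matrix.mul_sub, Matrix.sub_mul, trace_sub, Matrix.mul_smul,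
      Matrix.smul_mul, trace_smul, smul_eq_mul]
  have hnn : 0 ≤ (1 - lam0) ^ l * (Xᵀ * L * (P ^ l * X)).trace
      - ((P ^ l * X)ᵀ * L * (P ^ l * X)).trace := by
    rw [key, ← conjTranspose_eq_transpose_of_trivial (Uᵀ * X)]
    refine (PosSemidef.conjTranspose_mul_mul_same (posSemidef_diagonal_iff.2 ?_) _).trace_nonneg
    intro i
    have hq : 0 ≤ (1 - v i) ^ l := pow_nonneg (by linarith [h1 i]) l
    rcases eq_or_ne (v i) 0 with hz | hz
    · simp [hz]
    · have hle : (1 - v i) ^ l ≤ (1 - lam0) ^ l :=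
        pow_le_pow_left₀ (by linarith [h1 i]) (by linarith [hspec _ (hv i) hz]) l
      have := mul_nonneg (mul_nonneg (h0 i) hq) (sub_nonneg.2 hle)
      linarith
  linarith
end

section
/- Let L be a symmetric positive semidefinite real n×n matrix such that I − L is also positive semidefinite, let P = I − L, and let E(H) = trace(Hᵀ L H). Let λ₀ be a real number with 0 < λ₀ ≤ 1 such that every nonzero eigenvalue of L is at least λ₀. Then for every real n×d matrix X and every natural number l, trace(Xᵀ L P^l X) ≤ (1 − λ₀)^l · E(X). -/
open Matrix BigOperators

/-- `trace(Xᵀ L P^l X) ≤ (1 − λ₀)^l · E(X)` when `L` and `I − L` are PSD,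
`P = I − L`, and every nonzero eigenvalue of `L` is at least `λ₀ ∈ (0,1]`. -/
theorem cross_term_le_scaled_energy (n d : ℕ) (L : Matrix (Fin n) (Fin n) ℝ)
    (hL : L.PosSemidef) (hIL : ((1 : Matrix (Fin n) (Fin n) ℝ) - L).PosSemidef)
    (P : Matrix (Fin n) (Fin n) ℝ) (hP : P = 1 - L)
    (lam0 : ℝ) (hlam0 : 0 < lam0) (hlam1 : lam0 ≤ 1)
    (hspec : ∀ μ ∈ spectrum ℝ L, μ ≠ 0 → lam0 ≤ μ)
    (X : Matrix (Fin n) (Fin d) ℝ) (l : ℕ) :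
    (Xᵀ * L * (P ^ l * X)).trace ≤ (1 - lam0) ^ l * (Xᵀ * L * X).trace := by
  obtain ⟨U, a, hUU, hUU', hLU, ha⟩ : ∃ (U : Matrix (Fin n) (Fin n) ℝ) (a : Fin n → ℝ),
      Uᴴ * U = 1 ∧ U * Uᴴ = 1 ∧ L = U * diagonal a * Uᴴ ∧ ∀ i, a i ∈ spectrum ℝ L := by
    refine ⟨hL.1.eigenvectorUnitary, hL.1.eigenvalues, ?_, ?_, ?_, ?_⟩
    · exact Unitary.coe_star_mul_self hL.1.eigenvectorUnitary
    · exact Unitary.coe_mul_star_self hL.1.eigenvectorUnitary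
    · have h := hL.1.spectral_theorem
      rw [Unitary.conjStarAlgAut_apply] at h
      exact h
    · exact hL.1.eigenvalues_mem_spectrum_real
  have hLd : Uᴴ * L * U = diagonal a := by
    rw [hLU]
    calc Uᴴ * (U * diagonal a * Uᴴ) * U = (Uᴴ * U) * diagonal a * (Uᴴ * U) := by
          simp only [Matrix.mul_assoc]
      _ = diagonal a := by rw [hUU]; simp
  have ha0 : ∀ i, 0 ≤ a i := by
    have h := hL.conjTranspose_mul_mul_same U
    rw [hLd] at h
    exact posSemidef_diagonal_iff.mp h
  have ha1 : ∀ i, 0 ≤ 1 - a i := by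
    have h := hIL.conjTranspose_mul_mul_same U
    rw [Matrix.mul_sub, Matrix.sub_mul, hLd, Matrix.mul_one, hUU, ← diagonal_one,
      diagonal_sub] at h
    exact posSemidef_diagonal_iff.mp h
  have hPU : P = U * diagonal (fun i => 1 - a i) * Uᴴ := by
    rw [← diagonal_sub, diagonal_one, Matrix.mul_sub, Matrix.sub_mul, ← hLU, Matrix.mul_one,
      hUU', hP]
  have key : ∀ b c : Fin n → ℝ, (U * diagonal b * Uᴴ) * (U * diagonal c * Uᴴ)
      = U * diagonal (fun i => b i * c i) * Uᴴ := by
    intro b c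
    calc (U * diagonal b * Uᴴ) * (U * diagonal c * Uᴴ)
        = U * diagonal b * (Uᴴ * U) * diagonal c * Uᴴ := by simp only [Matrix.mul_assoc]
      _ = _ := by rw [hUU, Matrix.mul_one, Matrix.mul_assoc U, diagonal_mul_diagonal]
  have hLP : ∀ k : ℕ, L * P ^ k = U * diagonal (fun i => a i * (1 - a i) ^ k) * Uᴴ := by
    intro k
    induction k with
    | zero => simpa using hLU
    | succ k ih =>
      rw [pow_succ, ← Matrix.mul_assoc, ih, hPU, key]
      simp only [pow_succ, mul_assoc]
  have hM : ((1 - lam0) ^ l • L - L * P ^ l).PosSemidef := by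
    have h : (1 - lam0) ^ l • L - L * P ^ l
        = U * diagonal (fun i => (1 - lam0) ^ l * a i - a i * (1 - a i) ^ l) * Uᴴ := by
      rw [hLP l, ← diagonal_sub, Matrix.mul_sub, Matrix.sub_mul]
      congr 1
      have : diagonal (fun i => (1 - lam0) ^ l * a i) = (1 - lam0) ^ l • diagonal a := by
        rw [← diagonal_smul]; rfl
      rw [this, Matrix.mul_smul, Matrix.smul_mul, ← hLU]
    rw [h]
    refine PosSemidef.mul_mul_conjTranspose_same (posSemidef_diagonal_iff.mpr fun i => ?_) U
    by_cases hi : a i = 0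
    · simp [hi]
    · have h1 := hspec _ (ha i) hi
      have h2 : (1 - a i) ^ l ≤ (1 - lam0) ^ l := pow_le_pow_left₀ (ha1 i) (by linarith) l
      nlinarith [mul_le_mul_of_nonneg_left h2 (ha0 i)]
  have ht := (hM.conjTranspose_mul_mul_same X).trace_nonneg
  rw [conjTranspose_eq_transpose_of_trivial, Matrix.mul_sub, Matrix.sub_mul, trace_sub,
    Matrix.mul_smul, Matrix.smul_mul, trace_smul, smul_eq_mul] at ht
  have e : Xᵀ * L * (P ^ l * X) = Xᵀ * (L * P ^ l) * X := by simp only [Matrix.mul_assoc]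
  rw [e]
  linarith
end

section
/- Let L be a symmetric positive semidefinite real n×n matrix such that 2I − L is also positive semidefinite, let P = I − L, and let E(H) = trace(Hᵀ L H). Then for every real n×d matrix X, every natural number l, and every real α with 0 ≤ α ≤ 1, setting Y = P^l X one has E(αX + (1−α)Y) − E(Y) ≥ 2α(1−α) · ( trace(Xᵀ L Y) − E(Y) ). -/
open Matrix BigOperators

theorem energy_step_aux {n d : ℕ} (L : Matrix (Fin n) (Fin n) ℝ)
    (hT : Lᵀ = L)
    (h2L : ((2 : ℝ) • (1 : Matrix (Fin n) (Fin n) ℝ) - L).PosSemidef)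
    (Z : Matrix (Fin n) (Fin d) ℝ) :
    (((1 - L) * Z)ᵀ * L * ((1 - L) * Z)).trace ≤ (Zᵀ * L * Z).trace := by
  have h := (h2L.conjTranspose_mul_mul_same (L * Z)).trace_nonneg
  rw [conjTranspose_eq_transpose_of_trivial] at h
  have e : ((1 - L) * Z)ᵀ * L * ((1 - L) * Z) =
      Zᵀ * L * Z - (L * Z)ᵀ * ((2 : ℝ) • (1 : Matrix (Fin n) (Fin n) ℝ) - L) * (L * Z) := by
    simp only [transpose_mul, transpose_sub, hT, Matrix.mul_sub, Matrix.sub_mul,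
      Matrix.mul_one, Matrix.one_mul, Matrix.mul_assoc, two_smul, Matrix.mul_add, Matrix.add_mul]
    abel
  rw [e, trace_sub]
  linarith

/-- With `Y = P^l X`, one has
`E(αX + (1−α)Y) − E(Y) ≥ 2α(1−α)(trace(Xᵀ L Y) − E(Y))`. -/
theorem energy_combination_lower (n d : ℕ) (L : Matrix (Fin n) (Fin n) ℝ)
    (hL : L.PosSemidef)
    (h2L : ((2 : ℝ) • (1 : Matrix (Fin n) (Fin n) ℝ) - L).PosSemidef)
    (P : Matrix (Fin n) (Fin n) ℝ) (hP : P = 1 - L)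
    (X : Matrix (Fin n) (Fin d) ℝ) (l : ℕ) (α : ℝ) (hα0 : 0 ≤ α) (hα1 : α ≤ 1)
    (Y : Matrix (Fin n) (Fin d) ℝ) (hY : Y = P ^ l * X) :
    2 * α * (1 - α) * ((Xᵀ * L * Y).trace - (Yᵀ * L * Y).trace) ≤
      ((α • X + (1 - α) • Y)ᵀ * L * (α • X + (1 - α) • Y)).trace -
        (Yᵀ * L * Y).trace := by
  have hT : Lᵀ = L := by
    have := hL.isHermitian.eq
    rwa [conjTranspose_eq_transpose_of_trivial] at this
  have hE : (Yᵀ * L * Y).trace ≤ (Xᵀ * L * X).trace := by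
    subst hY hP
    induction l with
    | zero => simp
    | succ k ih =>
      rw [pow_succ', Matrix.mul_assoc (1 - L) ((1 - L) ^ k) X]
      have hk := energy_step_aux L hT h2L ((1 - L) ^ k * X)
      exact le_trans hk ih
  have hs : (Yᵀ * L * X).trace = (Xᵀ * L * Y).trace := by
    rw [← trace_transpose]
    simp only [transpose_mul, transpose_transpose, hT, Matrix.mul_assoc]
  have e : ((α • X + (1 - α) • Y)ᵀ * L * (α • X + (1 - α) • Y)).trace =
      α ^ 2 * (Xᵀ * L * X).trace + 2 * α * (1 - α) * (Xᵀ * L * Y).trace +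
        (1 - α) ^ 2 * (Yᵀ * L * Y).trace := by
    simp only [transpose_add, transpose_smul, Matrix.add_mul, Matrix.mul_add, Matrix.smul_mul,
      Matrix.mul_smul, trace_add, trace_smul, smul_eq_mul, hs]
    ring
  rw [e]
  nlinarith [mul_nonneg (sq_nonneg α) (sub_nonneg.2 hE)]
end

section
/- (Proposition 1) Let L be a symmetric positive semidefinite real n×n matrix such that I − L is also positive semidefinite, let P = I − L, and let E(H) = trace(Hᵀ L H). Then for every real n×d matrix X, every natural number l, and every real α with 0 ≤ α ≤ 1, the combined output of the MLP branch X and the GCN branch Y = P^l X has Dirichlet energy at least that of the GCN branch alone: E(αX + (1−α)P^l X) ≥ E(P^l X). -/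
open Matrix BigOperators

/-- Proposition 1: the MLP partner raises the Dirichlet energy of the last layer's
embeddings, i.e. `E(αX + (1−α)P^l X) ≥ E(P^l X)`. -/
theorem mlp_partner_raises_energy (n d : ℕ) (L : Matrix (Fin n) (Fin n) ℝ)
    (hL : L.PosSemidef) (hIL : ((1 : Matrix (Fin n) (Fin n) ℝ) - L).PosSemidef)
    (P : Matrix (Fin n) (Fin n) ℝ) (hP : P = 1 - L)
    (X : Matrix (Fin n) (Fin d) ℝ) (l : ℕ) (α : ℝ) (hα0 : 0 ≤ α) (hα1 : α ≤ 1) :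
    ((P ^ l * X)ᵀ * L * (P ^ l * X)).trace ≤
      ((α • X + (1 - α) • (P ^ l * X))ᵀ * L *
        (α • X + (1 - α) • (P ^ l * X))).trace := by
  rw [← hP] at hIL
  have hLP : L = 1 - P := by rw [hP]; abel
  have hLt : Lᵀ = L := by simpa [conjTranspose_eq_transpose_of_trivial] using hL.isHermitian.eq
  have hQt : (P ^ l)ᵀ = P ^ l := by
    simpa [conjTranspose_eq_transpose_of_trivial] using (hIL.pow l).isHermitian.eq
  have hc : Commute L (P ^ l) := by
    apply Commute.pow_right
    rw [hLP]
    exact (Commute.one_left P).sub_left (Commute.refl P)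
  have hgeom : L * (∑ k ∈ Finset.range l, P ^ k) = 1 - P ^ l := by
    rw [hLP]; exact mul_neg_geom_sum P l
  have hgeom' : (∑ k ∈ Finset.range l, P ^ k) * L = 1 - P ^ l := by
    rw [hLP]; exact geom_sum_mul_neg P l
  -- the cross term
  have hA : (L * P ^ l * (1 - P ^ l)).PosSemidef := by
    have : L * P ^ l * (1 - P ^ l) = ∑ k ∈ Finset.range l, Lᴴ * P ^ (l + k) * L := by
      rw [← hgeom', hL.isHermitian.eq, ← Finset.sum_mul, ← Finset.mul_sum]
      simp only [pow_add, ← Finset.mul_sum, Matrix.mul_assoc]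
    rw [this]
    exact posSemidef_sum _ fun k _ => (hIL.pow (l + k)).conjTranspose_mul_mul_same L
  have hB : ((1 - P ^ l)ᴴ * L * (1 - P ^ l)).PosSemidef := hL.conjTranspose_mul_mul_same _
  have hM := (((hA.smul hα0).add (hA.smul hα0)).add
    (hB.smul (mul_nonneg hα0 hα0))).conjTranspose_mul_mul_same X
  have ht := hM.trace_nonneg
  rw [← sub_nonneg, ← trace_sub]
  refine ht.trans_eq (congrArg trace (Eq.symm ?_))
  have e : α • X + (1 - α) • (P ^ l * X) = (P ^ l + α • (1 - P ^ l)) * X := by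
    simp only [Matrix.add_mul, Matrix.smul_mul, Matrix.sub_mul, Matrix.one_mul]
    module
  rw [e]
  simp only [conjTranspose_eq_transpose_of_trivial, transpose_mul, transpose_add, transpose_smul,
    transpose_sub, transpose_one, hQt]
  generalize P ^ l = Q at *
  have key : (Q + α • (1 - Q)) * L * (Q + α • (1 - Q)) - Q * L * Q =
      α • (L * Q * (1 - Q)) + α • (L * Q * (1 - Q)) + (α * α) • ((1 - Q) * L * (1 - Q)) := by
    have h1 : (1 - Q) * L * Q = L * Q * (1 - Q) := by
      rw [Matrix.sub_mul, ← hc.eq]; simp only [Matrix.one_mul]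
      noncomm_ring
    have h2 : Q * L * (1 - Q) = L * Q * (1 - Q) := by rw [hc.eq]
    simp only [Matrix.add_mul, Matrix.mul_add, Matrix.smul_mul, Matrix.mul_smul, h1, h2]
    module
  rw [← key]
  simp only [Matrix.mul_sub, Matrix.sub_mul, Matrix.mul_assoc]
end

section
/- (Proposition 2, lower bound) Let L be a symmetric positive semidefinite real n×n matrix such that I − L is also positive semidefinite, let P = I − L, and let E(H) = trace(Hᵀ L H). Then for every real n×d matrix X, every natural number l, and every real α with 0 ≤ α ≤ 1, E(αX + (1−α)P^l X) ≥ α² · E(X). -/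
open Matrix BigOperators

lemma aux_psd {n : ℕ} (L P : Matrix (Fin n) (Fin n) ℝ) (hL : L.PosSemidef) (hP : P.PosSemidef)
    (h : P = 1 - L) : ∀ l : ℕ, (P ^ l * L).PosSemidef
  | 0 => by simpa using hL
  | 1 => by
    have h1 := hL.conjTranspose_mul_mul_same P
    have h2 := hP.conjTranspose_mul_mul_same L
    rw [hP.isHermitian.eq] at h1
    rw [hL.isHermitian.eq] at h2
    have h3 := h1.add h2
    have e : P ^ 1 * L = P * L * P + L * P * L := by
      subst h
      noncomm_ring
    rw [e]
    exact h3
  | l + 2 => by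
    have h1 := (aux_psd L P hL hP h l).conjTranspose_mul_mul_same P
    rw [hP.isHermitian.eq] at h1
    have c : L * P = P * L := by
      subst h
      noncomm_ring
    have e : P ^ (l + 2) * L = P * (P ^ l * L) * P := by
      rw [Matrix.mul_assoc P, Matrix.mul_assoc (P ^ l), c, ← Matrix.mul_assoc (P ^ l),
        ← pow_succ, ← Matrix.mul_assoc, ← pow_succ']
    rw [e]
    exact h1

/-- Proposition 2 (lower bound): `E(αX + (1−α)P^l X) ≥ α² E(X)`. -/
theorem gpnn_energy_lower_bound (n d : ℕ) (L : Matrix (Fin n) (Fin n) ℝ)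
    (hL : L.PosSemidef) (hIL : ((1 : Matrix (Fin n) (Fin n) ℝ) - L).PosSemidef)
    (P : Matrix (Fin n) (Fin n) ℝ) (hP : P = 1 - L)
    (X : Matrix (Fin n) (Fin d) ℝ) (l : ℕ) (α : ℝ) (hα0 : 0 ≤ α) (hα1 : α ≤ 1) :
    α ^ 2 * (Xᵀ * L * X).trace ≤
      ((α • X + (1 - α) • (P ^ l * X))ᵀ * L *
        (α • X + (1 - α) • (P ^ l * X))).trace := by
  have hPP : P.PosSemidef := hP ▸ hIL
  have hM := aux_psd L P hL hPP hP l
  have hT : (P ^ l)ᵀ = P ^ l := by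
    have := (hPP.isHermitian.pow l).eq
    rwa [conjTranspose_eq_transpose_of_trivial] at this
  have t1 := (hM.conjTranspose_mul_mul_same X).trace_nonneg
  have t2 := (hL.conjTranspose_mul_mul_same (P ^ l * X)).trace_nonneg
  rw [conjTranspose_eq_transpose_of_trivial] at t1 t2
  have e1 : (P ^ l * X)ᵀ * L * X = Xᵀ * (P ^ l * L) * X := by
    rw [transpose_mul, hT]; simp only [Matrix.mul_assoc]
  have c : L * P ^ l = P ^ l * L := by
    have : Commute L P := by
      subst hP
      exact (Commute.one_right L).sub_right (Commute.refl L)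
    exact this.pow_right l
  have e2 : Xᵀ * L * (P ^ l * X) = Xᵀ * (P ^ l * L) * X := by
    rw [← c]; simp only [Matrix.mul_assoc]
  simp only [transpose_add, transpose_smul, Matrix.add_mul, Matrix.mul_add, Matrix.smul_mul,
    Matrix.mul_smul, trace_add, trace_smul, smul_eq_mul, e1, e2]
  have a := mul_nonneg (mul_nonneg hα0 (sub_nonneg.2 hα1)) t1
  have b := mul_nonneg (sq_nonneg (1 - α)) t2
  nlinarith
end

section
/- (Proposition 2, upper bound) Let L be a symmetric positive semidefinite real n×n matrix such that I − L is also positive semidefinite, let P = I − L, and let E(H) = trace(Hᵀ L H). Let λ₀ be a real number with 0 < λ₀ ≤ 1 such that every nonzero eigenvalue of L is at least λ₀. Then for every real n×d matrix X, every natural number l, and every real α with 0 ≤ α ≤ 1, E(αX + (1−α)P^l X) ≤ (α² + (1 − λ₀)^l) · E(X). -/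
open Matrix BigOperators

theorem gpnn_aux_scalar (lam lam0 α : ℝ) (l : ℕ) (h0 : 0 ≤ lam) (h1 : lam ≤ 1) (hl1 : lam0 ≤ 1)
    (hs : lam ≠ 0 → lam0 ≤ lam) (hα0 : 0 ≤ α) (hα1 : α ≤ 1) :
    0 ≤ (α ^ 2 + (1 - lam0) ^ l) * lam
      - (α + (1 - α) * (1 - lam) ^ l) * lam * (α + (1 - α) * (1 - lam) ^ l) := by
  by_cases h : lam = 0
  · simp [h]
  have hq : (1 - lam) ^ l ≤ (1 - lam0) ^ l :=
    pow_le_pow_left₀ (by linarith) (by linarith [hs h]) l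
  have ht0 : 0 ≤ (1 - lam) ^ l := pow_nonneg (by linarith) l
  have ht1 : (1 - lam) ^ l ≤ 1 := pow_le_one₀ (by linarith) (by linarith)
  generalize (1 - lam) ^ l = t at *
  generalize (1 - lam0) ^ l = q at *
  have key : 0 ≤ α ^ 2 + q - (α + (1 - α) * t) ^ 2 := by
    have e1 : 0 ≤ (1 - α) ^ 2 * (t * (1 - t)) :=
      mul_nonneg (sq_nonneg _) (mul_nonneg ht0 (by linarith))
    have e2 : 0 ≤ α ^ 2 * t := by positivity
    nlinarith
  nlinarith [mul_nonneg key h0]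

theorem gpnn_aux_psd (n : ℕ) (L : Matrix (Fin n) (Fin n) ℝ)
    (hL : L.PosSemidef) (hIL : ((1 : Matrix (Fin n) (Fin n) ℝ) - L).PosSemidef)
    (lam0 : ℝ) (hlam1 : lam0 ≤ 1)
    (hspec : ∀ μ ∈ spectrum ℝ L, μ ≠ 0 → lam0 ≤ μ)
    (l : ℕ) (α : ℝ) (hα0 : 0 ≤ α) (hα1 : α ≤ 1) :
    ((α ^ 2 + (1 - lam0) ^ l) • L - (α • 1 + (1 - α) • (1 - L) ^ l) * L *
      (α • 1 + (1 - α) • (1 - L) ^ l)).PosSemidef := by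
  have hH := hL.isHermitian
  let U : Matrix (Fin n) (Fin n) ℝ := hH.eigenvectorUnitary
  let e := hH.eigenvalues
  have hUU : Uᴴ * U = 1 := Unitary.coe_star_mul_self hH.eigenvectorUnitary
  have hUU' : U * Uᴴ = 1 := Unitary.coe_mul_star_self hH.eigenvectorUnitary
  have hspecL : L = U * diagonal e * Uᴴ := by
    have := hH.spectral_theorem
    rw [Unitary.conjStarAlgAut_apply] at this
    exact this
  have hmul : ∀ a b : Fin n → ℝ, (U * diagonal a * Uᴴ) * (U * diagonal b * Uᴴ)
      = U * diagonal (fun i => a i * b i) * Uᴴ := by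
    intro a b
    rw [← diagonal_mul_diagonal]
    calc _ = U * diagonal a * (Uᴴ * U) * diagonal b * Uᴴ := by simp only [Matrix.mul_assoc]
      _ = _ := by rw [hUU]; simp only [Matrix.mul_assoc, Matrix.one_mul]
  have hone : (1 : Matrix (Fin n) (Fin n) ℝ) = U * diagonal (fun _ => 1) * Uᴴ := by
    rw [diagonal_one, Matrix.mul_one, hUU']
  have hadd : ∀ a b : Fin n → ℝ, (U * diagonal a * Uᴴ) + (U * diagonal b * Uᴴ)
      = U * diagonal (fun i => a i + b i) * Uᴴ := by
    intro a b
    rw [← diagonal_add, Matrix.mul_add, Matrix.add_mul]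
  have hsub : ∀ a b : Fin n → ℝ, (U * diagonal a * Uᴴ) - (U * diagonal b * Uᴴ)
      = U * diagonal (fun i => a i - b i) * Uᴴ := by
    intro a b
    rw [← diagonal_sub, Matrix.mul_sub, Matrix.sub_mul]
  have hsmul : ∀ (c : ℝ) (a : Fin n → ℝ), c • (U * diagonal a * Uᴴ)
      = U * diagonal (fun i => c * a i) * Uᴴ := by
    intro c a
    have : diagonal (fun i => c * a i) = c • diagonal a := by
      rw [← diagonal_smul]; rfl
    rw [this, Matrix.mul_smul, Matrix.smul_mul]
  have hP : (1 - L) = U * diagonal (fun i => 1 - e i) * Uᴴ := by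
    conv_lhs => rw [hone, hspecL]
    rw [hsub]
  have hpow : (1 - L) ^ l = U * diagonal (fun i => (1 - e i) ^ l) * Uᴴ := by
    induction l with
    | zero => simpa using hone
    | succ k ih => rw [pow_succ, ih, hP, hmul]; simp only [pow_succ]
  have hM : α • (1 : Matrix (Fin n) (Fin n) ℝ) + (1 - α) • (1 - L) ^ l
      = U * diagonal (fun i => α + (1 - α) * (1 - e i) ^ l) * Uᴴ := by
    rw [hpow, hone, hsmul, hsmul, hadd]; simp only [mul_one]
  have he1 : ∀ i, e i ≤ 1 := by
    have h := hIL.conjTranspose_mul_mul_same U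
    have h2 : Uᴴ * (1 - L) * U = diagonal (fun i => 1 - e i) := by
      rw [hP]
      calc _ = (Uᴴ * U) * diagonal (fun i => 1 - e i) * (Uᴴ * U) := by
            simp only [Matrix.mul_assoc]
        _ = _ := by rw [hUU, Matrix.one_mul, Matrix.mul_one]
    rw [h2, posSemidef_diagonal_iff] at h
    intro i
    linarith [h i]
  rw [hM]
  have hL2 : (α ^ 2 + (1 - lam0) ^ l) • L = 
      U * diagonal (fun i => (α ^ 2 + (1 - lam0) ^ l) * e i) * Uᴴ := by
    conv_lhs => rw [hspecL]
    rw [hsmul]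
  rw [hL2]
  have hMLM : ∀ a : Fin n → ℝ, (U * diagonal a * Uᴴ) * L * (U * diagonal a * Uᴴ)
      = U * diagonal (fun i => a i * e i * a i) * Uᴴ := by
    intro a
    conv_lhs => rw [hspecL]
    rw [hmul, hmul]
  rw [hMLM, hsub]
  apply PosSemidef.mul_mul_conjTranspose_same
  rw [posSemidef_diagonal_iff]
  intro i
  exact gpnn_aux_scalar (e i) lam0 α l (hL.eigenvalues_nonneg i) (he1 i) hlam1
    (hspec _ (hH.eigenvalues_mem_spectrum_real i)) hα0 hα1



/-- Proposition 2 (upper bound): `E(αX + (1−α)P^l X) ≤ (α² + (1−λ₀)^l) E(X)`. -/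
theorem gpnn_energy_upper_bound (n d : ℕ) (L : Matrix (Fin n) (Fin n) ℝ)
    (hL : L.PosSemidef) (hIL : ((1 : Matrix (Fin n) (Fin n) ℝ) - L).PosSemidef)
    (P : Matrix (Fin n) (Fin n) ℝ) (hP : P = 1 - L)
    (lam0 : ℝ) (hlam0 : 0 < lam0) (hlam1 : lam0 ≤ 1)
    (hspec : ∀ μ ∈ spectrum ℝ L, μ ≠ 0 → lam0 ≤ μ)
    (X : Matrix (Fin n) (Fin d) ℝ) (l : ℕ) (α : ℝ) (hα0 : 0 ≤ α) (hα1 : α ≤ 1) :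
    ((α • X + (1 - α) • (P ^ l * X))ᵀ * L *
        (α • X + (1 - α) • (P ^ l * X))).trace ≤
      (α ^ 2 + (1 - lam0) ^ l) * (Xᵀ * L * X).trace := by
  subst hP
  have h := (gpnn_aux_psd n L hL hIL lam0 hlam1 hspec l α hα0 hα1).conjTranspose_mul_mul_same X
  have ht := h.trace_nonneg
  have hPT : ((1 - L) ^ l)ᵀ = (1 - L) ^ l := by
    have := hIL.isHermitian.eq
    rw [conjTranspose_eq_transpose_of_trivial] at this
    rw [transpose_pow, this]
  have hX : α • X + (1 - α) • ((1 - L) ^ l * X) = (α • 1 + (1 - α) • (1 - L) ^ l) * X := by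
    rw [Matrix.add_mul, Matrix.smul_mul, Matrix.smul_mul, Matrix.one_mul]
  have hMT : (α • (1 : Matrix (Fin n) (Fin n) ℝ) + (1 - α) • (1 - L) ^ l)ᵀ
      = α • 1 + (1 - α) • (1 - L) ^ l := by
    rw [transpose_add, transpose_smul, transpose_smul, hPT, transpose_one]
  rw [hX, transpose_mul, hMT]
  rw [conjTranspose_eq_transpose_of_trivial, Matrix.mul_sub, Matrix.sub_mul, trace_sub,
    Matrix.mul_smul, Matrix.smul_mul, trace_smul, smul_eq_mul] at ht
  simp only [Matrix.mul_assoc] at ht ⊢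
  linarith
end

section
/- (Proposition 2, combined) Let L be a symmetric positive semidefinite real n×n matrix such that I − L is also positive semidefinite, let P = I − L, and let E(H) = trace(Hᵀ L H). Let λ₀ be a real number with 0 < λ₀ ≤ 1 such that every nonzero eigenvalue of L is at least λ₀. Then for every real n×d matrix X, every natural number l, and every real α with 0 ≤ α ≤ 1, the Dirichlet energy of the GPNN output is bounded above and below in terms of the initial energy: α² · E(X) ≤ E(αX + (1−α)P^l X) ≤ (α² + (1 − λ₀)^l) · E(X). -/
open Matrix BigOperators

lemma aux_trace {n d : ℕ} (f : Fin n → ℝ) (Y : Matrix (Fin n) (Fin d) ℝ) :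
    (Yᵀ * diagonal f * Y).trace = ∑ j, ∑ i, f i * (Y i j) ^ 2 := by
  refine Finset.sum_congr rfl fun j _ => ?_
  rw [diag_apply, Matrix.mul_apply]
  refine Finset.sum_congr rfl fun i _ => ?_
  rw [mul_diagonal, transpose_apply]
  ring

/-- Proposition 2 (combined): the Dirichlet energy of the GPNN output satisfies
`α² E(X) ≤ E(αX + (1−α)P^l X) ≤ (α² + (1−λ₀)^l) E(X)`. -/
theorem gpnn_energy_bounds (n d : ℕ) (L : Matrix (Fin n) (Fin n) ℝ)
    (hL : L.PosSemidef) (hIL : ((1 : Matrix (Fin n) (Fin n) ℝ) - L).PosSemidef)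
    (P : Matrix (Fin n) (Fin n) ℝ) (hP : P = 1 - L)
    (lam0 : ℝ) (hlam0 : 0 < lam0) (hlam1 : lam0 ≤ 1)
    (hspec : ∀ μ ∈ spectrum ℝ L, μ ≠ 0 → lam0 ≤ μ)
    (X : Matrix (Fin n) (Fin d) ℝ) (l : ℕ) (α : ℝ) (hα0 : 0 ≤ α) (hα1 : α ≤ 1) :
    α ^ 2 * (Xᵀ * L * X).trace ≤
      ((α • X + (1 - α) • (P ^ l * X))ᵀ * L *
        (α • X + (1 - α) • (P ^ l * X))).trace ∧
    ((α • X + (1 - α) • (P ^ l * X))ᵀ * L *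
        (α • X + (1 - α) • (P ^ l * X))).trace ≤
      (α ^ 2 + (1 - lam0) ^ l) * (Xᵀ * L * X).trace := by
  obtain ⟨U, μ, hU1, hU2, hLU, hmem⟩ : ∃ (U : Matrix (Fin n) (Fin n) ℝ) (μ : Fin n → ℝ),
      Uᵀ * U = 1 ∧ U * Uᵀ = 1 ∧ L = U * diagonal μ * Uᵀ ∧ ∀ i, μ i ∈ spectrum ℝ L := by
    refine ⟨hL.1.eigenvectorUnitary, hL.1.eigenvalues, ?_, ?_, ?_, ?_⟩
    · have := Unitary.coe_star_mul_self hL.1.eigenvectorUnitary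
      simpa [star_eq_conjTranspose] using this
    · have := Unitary.coe_mul_star_self hL.1.eigenvectorUnitary
      simpa [star_eq_conjTranspose] using this
    · have := hL.1.spectral_theorem
      rw [Unitary.conjStarAlgAut_apply] at this
      simpa [star_eq_conjTranspose, Function.comp_def] using this
    · intro i
      exact hL.1.eigenvalues_mem_spectrum_real i
  have hconj : ∀ A : Matrix (Fin n) (Fin n) ℝ, Uᵀ * (U * A * Uᵀ) * U = A := by
    intro A
    calc Uᵀ * (U * A * Uᵀ) * U = (Uᵀ * U) * A * (Uᵀ * U) := by simp only [Matrix.mul_assoc]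
      _ = A := by simp [hU1]
  have hμ0 : ∀ i, 0 ≤ μ i := by
    intro i
    have h := (hL.conjTranspose_mul_mul_same U).diag_nonneg (i := i)
    rw [conjTranspose_eq_transpose_of_trivial, hLU, hconj] at h
    simpa using h
  have hPU : P = U * diagonal (fun i => 1 - μ i) * Uᵀ := by
    have : (diagonal (fun i => 1 - μ i) : Matrix (Fin n) (Fin n) ℝ) = 1 - diagonal μ := by
      rw [← diagonal_one, diagonal_sub]
    rw [hP, this, Matrix.mul_sub, Matrix.sub_mul, ← hLU, Matrix.mul_one, hU2]
  have hμ1 : ∀ i, μ i ≤ 1 := by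
    intro i
    have h := (hIL.conjTranspose_mul_mul_same U).diag_nonneg (i := i)
    rw [conjTranspose_eq_transpose_of_trivial, ← hP, hPU, hconj] at h
    simpa using h
  have hPl : P ^ l = U * diagonal (fun i => (1 - μ i) ^ l) * Uᵀ := by
    induction l with
    | zero => simp [hU2]
    | succ k ih =>
      have hd : (diagonal (fun i => (1 - μ i) ^ (k + 1)) : Matrix (Fin n) (Fin n) ℝ)
          = diagonal (fun i => (1 - μ i) ^ k) * diagonal (fun i => 1 - μ i) := by
        rw [diagonal_mul_diagonal]; simp only [pow_succ]
      rw [pow_succ, ih, hd]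
      nth_rewrite 1 [hPU]
      calc _ = U * diagonal (fun i => (1 - μ i) ^ k) * (Uᵀ * U) *
            diagonal (fun i => 1 - μ i) * Uᵀ := by simp only [Matrix.mul_assoc]
        _ = _ := by rw [hU1]; simp only [Matrix.mul_assoc, Matrix.one_mul]
  obtain ⟨Y, hY⟩ : ∃ Y, X = U * Y := ⟨Uᵀ * X, by rw [← Matrix.mul_assoc, hU2, Matrix.one_mul]⟩
  have hH : α • X + (1 - α) • (P ^ l * X) =
      U * (diagonal (fun i => α + (1 - α) * (1 - μ i) ^ l) * Y) := by
    have h1 : P ^ l * X = U * (diagonal (fun i => (1 - μ i) ^ l) * Y) := by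
      rw [hPl, hY]
      calc _ = U * diagonal (fun i => (1 - μ i) ^ l) * (Uᵀ * U) * Y := by
            simp only [Matrix.mul_assoc]
        _ = _ := by rw [hU1]; simp only [Matrix.mul_assoc, Matrix.one_mul]
    rw [h1, hY, ← Matrix.mul_smul, ← Matrix.mul_smul, ← Matrix.mul_add]
    congr 1
    ext i j
    simp [diagonal_mul]
    ring
  have hE : ∀ Z : Matrix (Fin n) (Fin d) ℝ,
      ((U * Z)ᵀ * L * (U * Z)).trace = ∑ j, ∑ i, μ i * (Z i j) ^ 2 := by
    intro Z
    rw [← aux_trace]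
    congr 1
    rw [transpose_mul]
    calc _ = Zᵀ * (Uᵀ * L * U) * Z := by simp only [Matrix.mul_assoc]
      _ = _ := by rw [hLU, hconj]
  rw [hH, hE, hY, hE, Finset.mul_sum, Finset.mul_sum]
  simp only [diagonal_mul, Finset.mul_sum]
  have hT0 : ∀ i, 0 ≤ (1 - μ i) ^ l := fun i => pow_nonneg (by linarith [hμ1 i]) l
  constructor
  · refine Finset.sum_le_sum fun j _ => Finset.sum_le_sum fun i _ => ?_
    have h0 : 0 ≤ μ i * Y i j ^ 2 := mul_nonneg (hμ0 i) (sq_nonneg _)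
    have h1 : α ^ 2 ≤ (α + (1 - α) * (1 - μ i) ^ l) ^ 2 :=
      pow_le_pow_left₀ hα0 (by nlinarith [mul_nonneg (sub_nonneg.2 hα1) (hT0 i)]) 2
    calc _ ≤ _ := mul_le_mul_of_nonneg_right h1 h0
      _ = _ := by ring
  · refine Finset.sum_le_sum fun j _ => Finset.sum_le_sum fun i _ => ?_
    have h0 : 0 ≤ μ i * Y i j ^ 2 := mul_nonneg (hμ0 i) (sq_nonneg _)
    by_cases hz : μ i = 0
    · simp [hz]
    have hl := hspec _ (hmem i) hz
    have ht : (1 - μ i) ^ l ≤ (1 - lam0) ^ l :=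
      pow_le_pow_left₀ (by linarith [hμ1 i]) (by linarith) l
    have ht1 : (1 - μ i) ^ l ≤ 1 := pow_le_one₀ (by linarith [hμ1 i]) (by linarith [hμ0 i])
    have h1 : (α + (1 - α) * (1 - μ i) ^ l) ^ 2 ≤ α ^ 2 + (1 - lam0) ^ l := by
      have hT := hT0 i
      generalize (1 - μ i) ^ l = t at *
      have a1 : 0 ≤ (1 - α) ^ 2 * (t * (1 - t)) :=
        mul_nonneg (sq_nonneg _) (mul_nonneg hT (by linarith))
      have a2 : 0 ≤ α ^ 2 * t := by positivity
      nlinarith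
    calc _ = (α + (1 - α) * (1 - μ i) ^ l) ^ 2 * (μ i * Y i j ^ 2) := by ring
      _ ≤ _ := mul_le_mul_of_nonneg_right h1 h0
end

section
/- Let L be a symmetric positive semidefinite real n×n matrix such that I − L is also positive semidefinite, let P = I − L, and let E(H) = trace(Hᵀ L H). Let λ₀ be a real number with 0 < λ₀ ≤ 1 such that every nonzero eigenvalue of L is at least λ₀. Then for every real n×d matrix X, every natural number l, and every real α with 0 ≤ α ≤ 1, E(αX + (1−α)P^l X) ≤ α² E(X) + (1 − α²) · trace(Xᵀ L P^l X). -/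
open Matrix BigOperators

open scoped MatrixOrder in
lemma psd_mul_of_commute {n : ℕ} {A B : Matrix (Fin n) (Fin n) ℝ}
    (hA : A.PosSemidef) (hB : B.PosSemidef) (h : Commute A B) : (A * B).PosSemidef := by
  rw [← Matrix.nonneg_iff_posSemidef] at *
  exact h.mul_nonneg hA hB

/-- `E(αX + (1−α)P^l X) ≤ α² E(X) + (1 − α²)·trace(Xᵀ L P^l X)`. -/
theorem gpnn_energy_le_mixed (n d : ℕ) (L : Matrix (Fin n) (Fin n) ℝ)
    (hL : L.PosSemidef) (hIL : ((1 : Matrix (Fin n) (Fin n) ℝ) - L).PosSemidef)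
    (P : Matrix (Fin n) (Fin n) ℝ) (hP : P = 1 - L)
    (lam0 : ℝ) (hlam0 : 0 < lam0) (hlam1 : lam0 ≤ 1)
    (hspec : ∀ μ ∈ spectrum ℝ L, μ ≠ 0 → lam0 ≤ μ)
    (X : Matrix (Fin n) (Fin d) ℝ) (l : ℕ) (α : ℝ) (hα0 : 0 ≤ α) (hα1 : α ≤ 1) :
    ((α • X + (1 - α) • (P ^ l * X))ᵀ * L *
        (α • X + (1 - α) • (P ^ l * X))).trace ≤
      α ^ 2 * (Xᵀ * L * X).trace +
        (1 - α ^ 2) * (Xᵀ * L * (P ^ l * X)).trace := by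
  have hPP : P.PosSemidef := hP ▸ hIL
  have hLP : Commute L P := by
    subst hP
    exact (Commute.one_right L).sub_right (Commute.refl L)
  have hQ : ∀ k : ℕ, (P ^ k).PosSemidef := fun k => hPP.pow k
  have h1Q : ∀ k : ℕ, (1 - P ^ k).PosSemidef := by
    intro k
    induction k with
    | zero => simpa using PosSemidef.zero
    | succ k ih =>
      have e : (1 : Matrix (Fin n) (Fin n) ℝ) - P ^ (k + 1) = (1 - P ^ k) + L * P ^ k := by
        have : L = 1 - P := by rw [hP]; abel
        rw [this, pow_succ', sub_mul, one_mul]; abel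
      rw [e]
      exact ih.add (psd_mul_of_commute hL (hQ k) (hLP.pow_right k))
  have hc : Commute L (P ^ l) := hLP.pow_right l
  have hQs : (P ^ l)ᵀ = P ^ l := by
    have := (hQ l).isHermitian.eq
    rwa [conjTranspose_eq_transpose_of_trivial] at this
  have hM : (L * P ^ l * (1 - P ^ l)).PosSemidef := by
    refine psd_mul_of_commute (psd_mul_of_commute hL (hQ l) hc) (h1Q l) ?_
    exact (Commute.one_right _).sub_right (hc.mul_left (Commute.refl _))
  have hT : 0 ≤ (Xᵀ * (L * P ^ l * (1 - P ^ l)) * X).trace := by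
    have := (hM.conjTranspose_mul_mul_same X).trace_nonneg
    rwa [conjTranspose_eq_transpose_of_trivial] at this
  generalize P ^ l = Q at *
  have h1 : Xᵀ * (Q * (L * X)) = Xᵀ * (L * (Q * X)) := by
    rw [← Matrix.mul_assoc Q, ← hc.eq, Matrix.mul_assoc]
  have h2 : Xᵀ * (Q * (L * (Q * X))) = Xᵀ * (L * (Q * (Q * X))) := by
    rw [← Matrix.mul_assoc Q, ← hc.eq, Matrix.mul_assoc]
  simp only [transpose_add, transpose_smul, transpose_mul, hQs, Matrix.add_mul, Matrix.mul_add,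
    Matrix.smul_mul, Matrix.mul_smul, Matrix.mul_assoc, Matrix.mul_sub, Matrix.sub_mul,
    Matrix.one_mul, Matrix.mul_one, trace_add, trace_sub, trace_smul, smul_eq_mul, h1, h2]
    at hT ⊢
  nlinarith [mul_nonneg (sq_nonneg (1 - α)) hT]
end
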